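/- arXiv:2511.19309 — 2 statements merged into one kernel-verified Lean document; each statement's English description precedes it below -/
import Mathlib

section
/- Let 𝒫 be a generalized perimeter, R > 0, h > 0, E ∈ 𝔐_R with 𝒫(E) < +∞, and let F be any minimizer of 𝓕̃_h(E,·) in 𝔐_R. Then for every λ ∈ (−R,R): if H_λ ⊆ E then |H_λ \ F| = 0, and if E ⊆ H_λ then |F \ H_λ| = 0. In particular, if E ∈ 𝔐_r for some 0 < r ≤ R, then F coincides up to a null set with a set in 𝔐_r. -/
open MeasureTheory Filter Set
open scoped ENNReal

noncomputable section

/-- The flat torus `𝕋^{d-1}`. -/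
abbrev Torus (d : ℕ) : Type := Fin (d-1) → AddCircle (1:ℝ)

/-- The periodic strip `𝕋^{d-1} × ℝ`. -/
abbrev Cyl (d : ℕ) : Type := Torus d × ℝ

/-- The subgraph of a function `g : 𝕋^{d-1} → ℝ`. -/
def subgraph (d : ℕ) (g : Torus d → ℝ) : Set (Cyl d) := {x | x.2 ≤ g x.1}

/-- The class `𝔠_L` of periodic `L`-Lipschitz subgraphs. -/
def LipClass (d : ℕ) (L : ℝ) : Set (Set (Cyl d)) :=
  {E | ∃ g : Torus d → ℝ, LipschitzWith (Real.toNNReal L) g ∧ E = subgraph d g}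

/-- The slab `𝕊^d_R = 𝕋^{d-1} × (-R, R)`. -/
def SlabR (d : ℕ) (R : ℝ) : Set (Cyl d) := {x | -R < x.2 ∧ x.2 < R}

/-- The class `𝔐_R` of measurable sets squeezed between two halfspaces. -/
def MR (d : ℕ) (R : ℝ) : Set (Set (Cyl d)) :=
  {E | MeasurableSet E ∧ {x : Cyl d | x.2 < -R} ⊆ E ∧ E ⊆ {x : Cyl d | x.2 < R}}

/-- The periodic halfspace `H_λ = 𝕋^{d-1} × (-∞, λ)`. -/
def halfspace (d : ℕ) (lam : ℝ) : Set (Cyl d) := {x | x.2 < lam}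

/-- Translation of `𝕋^{d-1} × ℝ` by a vector `τ ∈ ℝ^d = ℝ^{d-1} × ℝ`,
acting through the quotient. -/
def translCyl (d : ℕ) (τ : (Fin (d-1) → ℝ) × ℝ) (x : Cyl d) : Cyl d :=
  (fun i => x.1 i + (τ.1 i : AddCircle (1:ℝ)), x.2 + τ.2)

/-- A generalized perimeter: a functional `𝒫 : 𝔐 → [0,+∞]` satisfying properties
(i)-(vi) of Definition 1.2. -/
structure GenPerimeter (d : ℕ) where
  P : Set (Cyl d) → ℝ≥0∞
  /-- (i) finiteness on periodic Lipschitz subgraphs -/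
  lip_finite : ∀ L : ℝ, 0 < L → ∀ E ∈ LipClass d L, P E < ⊤
  /-- (ii) `𝒫(∅) = 0` -/
  empty_eq : P ∅ = 0
  /-- (ii) `𝒫(𝕋^{d-1} × ℝ) = 0` -/
  univ_eq : P Set.univ = 0
  /-- (iii) invariance under modifications on null sets -/
  congr_ae : ∀ E E' : Set (Cyl d), volume (symmDiff E E') = 0 → P E = P E'
  /-- (iv) lower semicontinuity w.r.t. local `L¹` convergence -/
  lsc : ∀ (En : ℕ → Set (Cyl d)) (E : Set (Cyl d)),
      (∀ R : ℝ, 0 < R →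
        Tendsto (fun n => volume (symmDiff (En n) E ∩ SlabR d R)) atTop (nhds 0)) →
      P E ≤ liminf (fun n => P (En n)) atTop
  /-- (v) submodularity -/
  submodular : ∀ E F : Set (Cyl d), P (E ∪ F) + P (E ∩ F) ≤ P E + P F
  /-- (vi) translational invariance -/
  transl_inv : ∀ (E : Set (Cyl d)) (τ : (Fin (d-1) → ℝ) × ℝ), P (translCyl d τ '' E) = P E

/-- Signed distance from a set `E`. -/
def sdist (d : ℕ) (E : Set (Cyl d)) (x : Cyl d) : ℝ :=
  Metric.infDist x E - Metric.infDist x Eᶜ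

/-- The incremental functional `𝓕̃_h(E, F) = 𝒫(F) + (1/h) ∫_{F ∩ 𝕊^d_R} sdist_E`. -/
def Ftilde (d : ℕ) (P : GenPerimeter d) (R h : ℝ) (E F : Set (Cyl d)) : EReal :=
  (P.P F : EReal) + (((1/h) * ∫ x in F ∩ SlabR d R, sdist d E x) : ℝ)

/-- `F` minimizes `𝓕̃_h(E, ·)` in `𝔐_R`. -/
def IsMinimizer (d : ℕ) (P : GenPerimeter d) (R h : ℝ) (E F : Set (Cyl d)) : Prop :=
  F ∈ MR d R ∧ ∀ F' ∈ MR d R, Ftilde d P R h E F ≤ Ftilde d P R h E F'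

/-!
The submodularity and translation invariance of `𝒫` force halfspaces to minimize `𝒫` in `𝔐_R`.
If `𝒫(Gₖ) ≤ inf 𝒫 + εₖ` with `∑ εₖ < ∞`, then submodularity bounds `𝒫(⋃_{k ≥ K} Gₖ)` by
`inf 𝒫 + ∑_{k ≥ K} εₖ`, so by lower semicontinuity `limsup Gₖ` is a minimizer. Minimizers are
stable under countable unions, hence up to null sets there is a greatest one, `W`. For a downward
translate `W'` of `W`, the intersection `W ∩ W'` is a translate of a set in `𝔐_R`, so
submodularity makes `W ∪ W'` a minimizer and `W' ⊆ W` up to a null set; by Fubini, `W` is then a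
halfspace.

Therefore `F ∪ H_λ` and `F ∩ H_λ` have perimeter at most `𝒫(F)`, and minimality of `F` leaves only
the integral of `sdist_E` over `H_λ \ F`, respectively `F \ H_λ`, where it has a strict sign.
-/

section Submodular

variable {α : Type*} [Lattice α] {S : Set α} {f : α → ℝ≥0∞} {m : ℝ≥0∞}

theorem partialSups_mem_of_supClosed (hS : SupClosed S) {a : ℕ → α} (ha : ∀ n, a n ∈ S) (n : ℕ) :
    partialSups a n ∈ S := by
  rw [partialSups_apply]
  exact hS.finsetSup'_mem _ fun i _ => ha i

theorem apply_partialSups_le_of_submodular (hsup : SupClosed S) (hinf : InfClosed S)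
    (hf : ∀ a b, f (a ⊔ b) + f (a ⊓ b) ≤ f a + f b) (hm : m ≠ ⊤) (hmS : ∀ a ∈ S, m ≤ f a)
    {a : ℕ → α} (ha : ∀ n, a n ∈ S) {ε : ℕ → ℝ≥0∞} (hε : ∀ n, f (a n) ≤ m + ε n) (n : ℕ) :
    f (partialSups a n) ≤ m + ∑ i ∈ Finset.range (n + 1), ε i := by
  induction n with
  | zero => simpa using hε 0
  | succ n ih =>
    have hinter : m ≤ f (partialSups a n ⊓ a (n + 1)) :=
      hmS _ (hinf (partialSups_mem_of_supClosed hsup ha n) (ha (n + 1)))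
    rw [partialSups_add_one, Finset.sum_range_succ, ← ENNReal.add_le_add_iff_right hm]
    calc f (partialSups a n ⊔ a (n + 1)) + m
        ≤ f (partialSups a n ⊔ a (n + 1)) + f (partialSups a n ⊓ a (n + 1)) := by gcongr
      _ ≤ f (partialSups a n) + f (a (n + 1)) := hf _ _
      _ ≤ (m + ∑ i ∈ Finset.range (n + 1), ε i) + (m + ε (n + 1)) := add_le_add ih (hε _)
      _ = m + (∑ i ∈ Finset.range (n + 1), ε i + ε (n + 1)) + m := by ring

end Submodular

section MeasureLemmas

theorem measure_eq_zero_of_setIntegral_nonpos {X : Type*} [MeasurableSpace X] {μ : Measure X}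
    {s : Set X} {f : X → ℝ} (hf : ∀ᵐ x ∂μ.restrict s, 0 < f x) (hfs : IntegrableOn f s μ)
    (hint : ∫ x in s, f x ∂μ ≤ 0) : μ s = 0 := by
  have hf_nonneg : 0 ≤ᵐ[μ.restrict s] f := hf.mono fun _ hx => hx.le
  have hf_zero : f =ᵐ[μ.restrict s] 0 :=
    (setIntegral_eq_zero_iff_of_nonneg_ae hf_nonneg hfs).1
      (hint.antisymm (integral_nonneg_of_ae hf_nonneg))
  rw [← ae_restrict_eq_bot, ← eventually_false_iff_eq_bot]
  filter_upwards [hf, hf_zero] with x hpos hzero using hpos.ne' hzero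

theorem ae_notMem_of_neg_add_mem {X : Type*} [AddGroup X] [MeasurableSpace X] [MeasurableAdd₂ X]
    {μ : Measure X} [SFinite μ] [μ.IsAddLeftInvariant] {S W : Set X} (hS : MeasurableSet S)
    (hW : MeasurableSet W) (hSW : ∀ z ∈ S, ∀ᵐ x ∂μ, x + z ∈ W → x ∈ W) :
    ∀ᵐ x ∂μ, x ∉ W → ∀ᵐ y ∂μ, -x + y ∈ S → y ∉ W := by
  have hmeas : MeasurableSet {p : X × X | p.2 ∈ S → p.1 + p.2 ∈ W → p.1 ∈ W} :=
    ((measurable_snd hS).mem.imp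
      ((measurable_fst.add measurable_snd hW).mem.imp (measurable_fst hW).mem)).setOf
  have hswap : ∀ᵐ x ∂μ, ∀ᵐ z ∂μ, z ∈ S → x + z ∈ W → x ∈ W :=
    (Measure.ae_ae_comm hmeas).2 (ae_of_all _ fun z => eventually_imp_distrib_left.2 (hSW z))
  filter_upwards [hswap] with x hx hxW
  filter_upwards [(measurePreserving_add_left μ (-x)).quasiMeasurePreserving.ae hx]
    with y hy hyS hyW
  exact hxW (hy hyS (by rwa [add_neg_cancel_left]))

variable {G : Type*} [MeasurableSpace G]

theorem ae_prod_snd_ne (μ : Measure G) (c : ℝ) : ∀ᵐ x ∂μ.prod (volume : Measure ℝ), x.2 ≠ c :=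
  Measure.quasiMeasurePreserving_snd.ae (Measure.ae_ne volume c)

theorem exists_ae_eq_snd_lt {μ : Measure G} [NeZero μ] {W : Set (G × ℝ)}
    (hW : ∀ᵐ x ∂μ.prod volume, x ∉ W → ∀ᵐ y ∂μ.prod volume, x.2 < y.2 → y ∉ W)
    {a b : ℝ} (ha : {x | x.2 < a} ⊆ W) (hb : W ⊆ {x | x.2 < b}) :
    ∃ c : ℝ, W =ᵐ[μ.prod volume] {x | x.2 < c} := by
  let T : Set ℝ := {t | ∀ᵐ y ∂μ.prod volume, t < y.2 → y ∉ W}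
  have hT_nonempty : T.Nonempty := ⟨b, ae_of_all _ fun y hy hyW => lt_asymm hy (hb hyW)⟩
  have hT_bdd : BddBelow T := by
    refine ⟨a, fun t ht => not_lt.1 fun hta => ?_⟩
    have hnull : μ.prod volume (univ ×ˢ Ioo t a) = 0 := by
      refine measure_mono_null (fun y hy => ?_) (ae_iff.1 ht)
      exact fun hyW => hyW hy.2.1 (ha hy.2.2)
    rw [Measure.prod_prod, Real.volume_Ioo, mul_eq_zero, ENNReal.ofReal_eq_zero, sub_nonpos]
      at hnull
    exact hnull.elim (NeZero.ne (μ univ)) hta.not_ge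
  obtain ⟨t, -, ht_tendsto, htT⟩ := exists_seq_tendsto_sInf hT_nonempty hT_bdd
  have habove : ∀ᵐ y ∂μ.prod volume, ∀ n, t n < y.2 → y ∉ W := ae_all_iff.2 htT
  refine ⟨sInf T, eventuallyEq_set.2 ?_⟩
  filter_upwards [hW, habove, ae_prod_snd_ne μ (sInf T)] with x hxW hx_above hx_ne
  refine ⟨fun hx => ?_, fun hx => ?_⟩
  · refine lt_of_le_of_ne (not_lt.1 fun hlt => ?_) hx_ne
    obtain ⟨n, hn⟩ := (ht_tendsto.eventually_lt_const hlt).exists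
    exact hx_above n hn hx
  · by_contra hx_notMem
    exact (csInf_le hT_bdd (hxW hx_notMem)).not_gt hx

end MeasureLemmas

section Squeezed

variable {d : ℕ} {R : ℝ} {E : Set (Cyl d)}

instance isAddLeftInvariant_volume_cyl (d : ℕ) : (volume : Measure (Cyl d)).IsAddLeftInvariant :=
  Measure.prod.instIsAddLeftInvariant (μ := (volume : Measure (Torus d)))

theorem measurableSet_halfspace (d : ℕ) (lam : ℝ) : MeasurableSet (halfspace d lam) :=
  measurableSet_lt measurable_snd measurable_const

theorem measurableSet_slabR (d : ℕ) (R : ℝ) : MeasurableSet (SlabR d R) :=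
  (measurableSet_lt measurable_const measurable_snd).inter
    (measurableSet_lt measurable_snd measurable_const)

theorem slabR_subset_prod_Icc (d : ℕ) (R : ℝ) : SlabR d R ⊆ univ ×ˢ Icc (-R) R :=
  fun _ hx => ⟨mem_univ _, hx.1.le, hx.2.le⟩

theorem isCompact_univ_prod_Icc (d : ℕ) (a b : ℝ) :
    IsCompact ((univ : Set (Torus d)) ×ˢ Icc a b) :=
  isCompact_univ.prod isCompact_Icc

theorem volume_slabR_ne_top (d : ℕ) (R : ℝ) : volume (SlabR d R) ≠ ⊤ :=
  measure_ne_top_of_subset (slabR_subset_prod_Icc d R)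
    (isCompact_univ_prod_Icc d _ _).measure_lt_top.ne

theorem halfspace_mem_MR {lam : ℝ} (hlam : lam ∈ Icc (-R) R) : halfspace d lam ∈ MR d R :=
  ⟨measurableSet_halfspace d lam, fun _ hx => hx.trans_le hlam.1, fun _ hx => hx.trans_le hlam.2⟩

theorem supClosed_MR (d : ℕ) (R : ℝ) : SupClosed (MR d R) := fun _ hE _ hF =>
  ⟨hE.1.union hF.1, hE.2.1.trans subset_union_left, union_subset hE.2.2 hF.2.2⟩

theorem infClosed_MR (d : ℕ) (R : ℝ) : InfClosed (MR d R) := fun _ hE _ hF =>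
  ⟨hE.1.inter hF.1, subset_inter hE.2.1 hF.2.1, inter_subset_left.trans hE.2.2⟩

theorem iUnion_mem_MR {A : ℕ → Set (Cyl d)} (hA : ∀ n, A n ∈ MR d R) : ⋃ n, A n ∈ MR d R :=
  ⟨.iUnion fun n => (hA n).1, (hA 0).2.1.trans (subset_iUnion A 0),
    iUnion_subset fun n => (hA n).2.2⟩

theorem iInter_mem_MR {A : ℕ → Set (Cyl d)} (hA : ∀ n, A n ∈ MR d R) : ⋂ n, A n ∈ MR d R :=
  ⟨.iInter fun n => (hA n).1, subset_iInter fun n => (hA n).2.1,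
    (iInter_subset A 0).trans (hA 0).2.2⟩

theorem union_preimage_add_mem_MR (hE : E ∈ MR d R) {z : Cyl d} (hz : 0 ≤ z.2) :
    E ∪ (· + z) ⁻¹' E ∈ MR d R := by
  refine ⟨hE.1.union (measurable_add_const z hE.1), hE.2.1.trans subset_union_left,
    union_subset hE.2.2 fun x hx => ?_⟩
  have hx_lt : x.2 + z.2 < R := hE.2.2 hx
  exact (le_add_of_nonneg_right hz).trans_lt hx_lt

theorem preimage_inter_preimage_add_mem_MR (hE : E ∈ MR d R) {z : Cyl d} (hz : 0 ≤ z.2) :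
    (· + ((0, -z.2) : Cyl d)) ⁻¹' (E ∩ (· + z) ⁻¹' E) ∈ MR d R := by
  refine ⟨measurable_add_const _ (hE.1.inter (measurable_add_const z hE.1)),
    fun x hx => ⟨hE.2.1 ?_, hE.2.1 ?_⟩, fun x hx => ?_⟩
  · exact (add_le_of_nonpos_right (neg_nonpos.2 hz)).trans_lt hx
  · simpa using hx
  · simpa using hE.2.2 hx.2

theorem nonempty_of_mem_MR (hE : E ∈ MR d R) : E.Nonempty :=
  ⟨(0, -R - 1), hE.2.1 (sub_one_lt (-R))⟩

theorem compl_nonempty_of_mem_MR (hE : E ∈ MR d R) : Eᶜ.Nonempty :=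
  ⟨(0, R), fun hx => lt_irrefl R (hE.2.2 hx)⟩

end Squeezed

namespace GenPerimeter

variable {d : ℕ} (P : GenPerimeter d) {R : ℝ}

theorem P_eq_of_ae_eq {E F : Set (Cyl d)} (h : E =ᵐ[volume] F) : P.P E = P.P F :=
  P.congr_ae E F (measure_symmDiff_eq_zero_iff.2 h)

theorem P_preimage_add_right (E : Set (Cyl d)) (z : Cyl d) : P.P ((· + z) ⁻¹' E) = P.P E := by
  have hlift : ∀ i, ∃ r : ℝ, (r : AddCircle (1 : ℝ)) = -z.1 i := fun i =>
    QuotientAddGroup.mk_surjective _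
  choose r hr using hlift
  have htransl : translCyl d (r, -z.2) = (· + -z) := by
    ext x i <;> simp [translCyl, hr]
  rw [← P.transl_inv E (r, -z.2), htransl, image_add_right, neg_neg]

theorem P_halfspace_eq (a b : ℝ) : P.P (halfspace d a) = P.P (halfspace d b) := by
  rw [← P.P_preimage_add_right (halfspace d b) (0, b - a)]
  congr 1
  ext x
  simp only [halfspace, mem_preimage, mem_ofPred_eq, Prod.snd_add]
  constructor <;> intro <;> linarith

theorem P_halfspace_ne_top (a : ℝ) : P.P (halfspace d a) ≠ ⊤ := by
  have hae : halfspace d a =ᵐ[volume] subgraph d fun _ => a := by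
    filter_upwards [ae_prod_snd_ne (volume : Measure (Torus d)) a] with x hx
    exact propext hx.le_iff_lt.symm
  rw [P.P_eq_of_ae_eq hae]
  exact (P.lip_finite 1 one_pos _ ⟨_, LipschitzWith.const' a, rfl⟩).ne

theorem P_le_liminf {A : ℕ → Set (Cyl d)} {B : Set (Cyl d)} (hA : ∀ n, MeasurableSet (A n))
    (hB : MeasurableSet B) (hAB : ∀ x, ∀ᶠ n in atTop, (x ∈ A n ↔ x ∈ B)) :
    P.P B ≤ liminf (fun n => P.P (A n)) atTop := by
  refine P.lsc A B fun r _ => ?_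
  rw [← measure_empty (μ := (volume : Measure (Cyl d)))]
  refine tendsto_measure_of_tendsto_indicator atTop
    (fun n => ((hA n).symmDiff hB).inter (measurableSet_slabR d r))
    (measurableSet_slabR d r) (volume_slabR_ne_top d r)
    (Eventually.of_forall fun _ => inter_subset_right) fun x => ?_
  filter_upwards [hAB x] with n hn
  simp [mem_symmDiff, hn]

theorem P_iUnion_le_liminf {A : ℕ → Set (Cyl d)} (hA : ∀ n, MeasurableSet (A n))
    (hmono : Monotone A) : P.P (⋃ n, A n) ≤ liminf (fun n => P.P (A n)) atTop := by
  refine P.P_le_liminf hA (.iUnion hA) fun x => ?_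
  by_cases hx : x ∈ ⋃ n, A n
  · obtain ⟨k, hk⟩ := mem_iUnion.1 hx
    filter_upwards [eventually_ge_atTop k] with n hn
    exact iff_of_true (hmono hn hk) hx
  · exact Eventually.of_forall fun n => iff_of_false (fun hn => hx (mem_iUnion_of_mem n hn)) hx

theorem P_iInter_le_liminf {A : ℕ → Set (Cyl d)} (hA : ∀ n, MeasurableSet (A n))
    (hanti : Antitone A) : P.P (⋂ n, A n) ≤ liminf (fun n => P.P (A n)) atTop := by
  refine P.P_le_liminf hA (.iInter hA) fun x => ?_
  by_cases hx : x ∈ ⋂ n, A n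
  · exact Eventually.of_forall fun n => iff_of_true (mem_iInter.1 hx n) hx
  · obtain ⟨k, hk⟩ := not_forall.1 (mt mem_iInter.2 hx)
    filter_upwards [eventually_ge_atTop k] with n hn
    exact iff_of_false (fun hxn => hk (hanti hn hxn)) hx

theorem P_iUnion_le_add_tsum {m : ℝ≥0∞} (hm : m ≠ ⊤) (hmR : ∀ G ∈ MR d R, m ≤ P.P G)
    {A : ℕ → Set (Cyl d)} (hA : ∀ n, A n ∈ MR d R) {ε : ℕ → ℝ≥0∞}
    (hε : ∀ n, P.P (A n) ≤ m + ε n) : P.P (⋃ n, A n) ≤ m + ∑' n, ε n := by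
  have hpartial (n : ℕ) : P.P (partialSups A n) ≤ m + ∑' n, ε n :=
    (apply_partialSups_le_of_submodular (supClosed_MR d R) (infClosed_MR d R) P.submodular hm
      hmR hA hε n).trans (by gcongr; exact ENNReal.sum_le_tsum _)
  calc P.P (⋃ n, A n) = P.P (⋃ n, partialSups A n) := by
        rw [← iSup_eq_iUnion, ← iSup_eq_iUnion, iSup_partialSups_eq]
    _ ≤ liminf (fun n => P.P (partialSups A n)) atTop :=
        P.P_iUnion_le_liminf
          (fun n => (partialSups_mem_of_supClosed (supClosed_MR d R) hA n).1)
          (partialSups A).monotone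
    _ ≤ liminf (fun _ : ℕ => m + ∑' n, ε n) atTop :=
        liminf_le_liminf (Eventually.of_forall hpartial)
    _ = m + ∑' n, ε n := liminf_const _

theorem exists_isMinOn_MR (hne : (MR d R).Nonempty) : ∃ V ∈ MR d R, IsMinOn P.P (MR d R) V := by
  let m : ℝ≥0∞ := ⨅ G ∈ MR d R, P.P G
  have hmR : ∀ G ∈ MR d R, m ≤ P.P G := fun G hG => iInf₂_le G hG
  rcases eq_or_ne m ⊤ with hm | hm
  · obtain ⟨G, hG⟩ := hne
    exact ⟨G, hG, fun G' hG' => le_top.trans (hm ▸ hmR G' hG')⟩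
  obtain ⟨ε, hε_pos, hε_sum⟩ := ENNReal.exists_pos_sum_of_countable' one_ne_zero ℕ
  have hnear (n : ℕ) : ∃ G ∈ MR d R, P.P G ≤ m + ε n := by
    have hlt : ⨅ G ∈ MR d R, P.P G < m + ε n := ENNReal.lt_add_right hm (hε_pos n).ne'
    obtain ⟨G, hG, hGlt⟩ := by simpa only [iInf_lt_iff, exists_prop] using hlt
    exact ⟨G, hG, hGlt.le⟩
  choose G hG hGε using hnear
  have htail (k : ℕ) : ⋃ n, G (n + k) ∈ MR d R := iUnion_mem_MR fun n => hG (n + k)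
  have hanti : Antitone fun k => ⋃ n, G (n + k) := antitone_nat_of_succ_le fun k =>
    iUnion_subset fun n => subset_iUnion_of_subset (n + 1) (by grind)
  have htail_tendsto : Tendsto (fun k => m + ∑' n, ε (n + k)) atTop (nhds m) := by
    simpa using tendsto_const_nhds.add
      (ENNReal.tendsto_sum_nat_add ε (hε_sum.trans ENNReal.one_lt_top).ne)
  refine ⟨⋂ k, ⋃ n, G (n + k), iInter_mem_MR htail, fun G' hG' => ?_⟩
  calc P.P (⋂ k, ⋃ n, G (n + k)) ≤ liminf (fun k => P.P (⋃ n, G (n + k))) atTop :=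
        P.P_iInter_le_liminf (fun k => (htail k).1) hanti
    _ ≤ liminf (fun k => m + ∑' n, ε (n + k)) atTop :=
        liminf_le_liminf (Eventually.of_forall fun k =>
          P.P_iUnion_le_add_tsum hm hmR (fun n => hG (n + k)) fun n => hGε (n + k))
    _ = m := htail_tendsto.liminf_eq
    _ ≤ P.P G' := hmR G' hG'

theorem exists_ae_greatest_isMinOn_MR {G : Set (Cyl d)} (hG : G ∈ MR d R) (hPG : P.P G ≠ ⊤) :
    ∃ W ∈ MR d R, IsMinOn P.P (MR d R) W ∧
      ∀ V ∈ MR d R, IsMinOn P.P (MR d R) V → V ≤ᵐ[volume] W := by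
  obtain ⟨V₀, hV₀, hV₀_min⟩ := P.exists_isMinOn_MR ⟨G, hG⟩
  let C : Set (Set (Cyl d)) := {V | V ∈ MR d R ∧ IsMinOn P.P (MR d R) V}
  obtain ⟨D, hDC, hD_countable, hD⟩ :=
    Measure.exists_ae_subset_biUnion_countable (volume : Measure (Cyl d)) (C := C)
      fun V hV => hV.1.1
  obtain ⟨A, hA⟩ := (hD_countable.insert V₀).exists_eq_range (insert_nonempty V₀ D)
  have hAC (n : ℕ) : A n ∈ C :=
    insert_subset (show V₀ ∈ C from ⟨hV₀, hV₀_min⟩) hDC (hA ▸ mem_range_self n)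
  have hunion_le : P.P (⋃ n, A n) ≤ P.P V₀ := by
    simpa using P.P_iUnion_le_add_tsum (ε := 0) (ne_top_of_le_ne_top hPG (hV₀_min hG))
      (fun G hG => hV₀_min hG) (fun n => (hAC n).1) fun n => by simpa using (hAC n).2 hV₀
  refine ⟨⋃ n, A n, iUnion_mem_MR fun n => (hAC n).1,
    fun G' hG' => hunion_le.trans (hV₀_min hG'), fun V hV hV_min => ?_⟩
  refine (hD V ⟨hV, hV_min⟩).trans (LE.le.eventuallyLE ?_)
  rw [← sUnion_range, ← hA]
  exact sUnion_subset_sUnion (subset_insert V₀ D)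

theorem isMinOn_union_preimage_add {W : Set (Cyl d)} (hW : W ∈ MR d R) (hPW : P.P W ≠ ⊤)
    (hW_min : IsMinOn P.P (MR d R) W) {z : Cyl d} (hz : 0 ≤ z.2) :
    IsMinOn P.P (MR d R) (W ∪ (· + z) ⁻¹' W) := by
  have hinter_ge : P.P W ≤ P.P (W ∩ (· + z) ⁻¹' W) := by
    simpa only [P.P_preimage_add_right] using
      isMinOn_iff.1 hW_min _ (preimage_inter_preimage_add_mem_MR hW hz)
  have hunion_le : P.P (W ∪ (· + z) ⁻¹' W) ≤ P.P W := by
    rw [← ENNReal.add_le_add_iff_right hPW]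
    calc P.P (W ∪ (· + z) ⁻¹' W) + P.P W
        ≤ P.P (W ∪ (· + z) ⁻¹' W) + P.P (W ∩ (· + z) ⁻¹' W) := by gcongr
      _ ≤ P.P W + P.P ((· + z) ⁻¹' W) := P.submodular _ _
      _ = P.P W + P.P W := by rw [P.P_preimage_add_right]
  exact fun G hG => hunion_le.trans (hW_min hG)

theorem P_halfspace_le {G : Set (Cyl d)} (hG : G ∈ MR d R) (lam : ℝ) :
    P.P (halfspace d lam) ≤ P.P G := by
  rcases eq_or_ne (P.P G) ⊤ with hPG | hPG
  · exact hPG ▸ le_top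
  obtain ⟨W, hW, hW_min, hW_greatest⟩ := P.exists_ae_greatest_isMinOn_MR hG hPG
  have hPW : P.P W ≠ ⊤ := ne_top_of_le_ne_top hPG (hW_min hG)
  have hdown (z : Cyl d) (hz : 0 < z.2) : ∀ᵐ x : Cyl d, x + z ∈ W → x ∈ W := by
    filter_upwards [hW_greatest _ (union_preimage_add_mem_MR hW hz.le)
      (P.isMinOn_union_preimage_add hW hPW hW_min hz.le)] with x hx hxz using hx (Or.inr hxz)
  have habove : ∀ᵐ x : Cyl d, x ∉ W → ∀ᵐ y : Cyl d, x.2 < y.2 → y ∉ W := by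
    simpa using ae_notMem_of_neg_add_mem (S := {z : Cyl d | 0 < z.2})
      (measurableSet_lt measurable_const measurable_snd) hW.1 hdown
  obtain ⟨c, hc⟩ : ∃ c : ℝ, W =ᵐ[volume] halfspace d c :=
    exists_ae_eq_snd_lt (μ := (volume : Measure (Torus d))) habove hW.2.1 hW.2.2
  calc P.P (halfspace d lam) = P.P W := by rw [P.P_halfspace_eq lam c, P.P_eq_of_ae_eq hc]
    _ ≤ P.P G := hW_min hG

theorem P_union_halfspace_le {F : Set (Cyl d)} {lam : ℝ} (hF : F ∈ MR d R)
    (hlam : lam ∈ Icc (-R) R) : P.P (F ∪ halfspace d lam) ≤ P.P F := by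
  rw [← ENNReal.add_le_add_iff_right (P.P_halfspace_ne_top lam)]
  calc P.P (F ∪ halfspace d lam) + P.P (halfspace d lam)
      ≤ P.P (F ∪ halfspace d lam) + P.P (F ∩ halfspace d lam) := by
        gcongr
        exact P.P_halfspace_le (infClosed_MR d R hF (halfspace_mem_MR hlam)) lam
    _ ≤ P.P F + P.P (halfspace d lam) := P.submodular _ _

theorem P_inter_halfspace_le {F : Set (Cyl d)} {lam : ℝ} (hF : F ∈ MR d R)
    (hlam : lam ∈ Icc (-R) R) : P.P (F ∩ halfspace d lam) ≤ P.P F := by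
  rw [← ENNReal.add_le_add_iff_left (P.P_halfspace_ne_top lam)]
  calc P.P (halfspace d lam) + P.P (F ∩ halfspace d lam)
      ≤ P.P (F ∪ halfspace d lam) + P.P (F ∩ halfspace d lam) := by
        gcongr
        exact P.P_halfspace_le (supClosed_MR d R hF (halfspace_mem_MR hlam)) lam
    _ ≤ P.P F + P.P (halfspace d lam) := P.submodular _ _
    _ = P.P (halfspace d lam) + P.P F := add_comm _ _

end GenPerimeter

section SignedDistance

variable {d : ℕ} {E : Set (Cyl d)} {x : Cyl d}

theorem sdist_compl (d : ℕ) (E : Set (Cyl d)) (x : Cyl d) : sdist d Eᶜ x = -sdist d E x := by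
  simp [sdist]

theorem continuous_sdist (d : ℕ) (E : Set (Cyl d)) : Continuous (sdist d E) :=
  (Metric.continuous_infDist_pt _).sub (Metric.continuous_infDist_pt _)

theorem integrableOn_sdist_slabR (d : ℕ) (E : Set (Cyl d)) (R : ℝ) :
    IntegrableOn (sdist d E) (SlabR d R) :=
  ((continuous_sdist d E).continuousOn.integrableOn_compact
    (isCompact_univ_prod_Icc d (-R) R)).mono_set (slabR_subset_prod_Icc d R)

theorem sdist_pos_of_notMem_closure (hE : E.Nonempty) (hx : x ∉ closure E) : 0 < sdist d E x := by
  have hxE : 0 < Metric.infDist x E := (Metric.infDist_pos_iff_notMem_closure hE).1 hx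
  have hxEc : Metric.infDist x Eᶜ = 0 := Metric.infDist_zero_of_mem fun h => hx (subset_closure h)
  rwa [sdist, hxEc, sub_zero]

theorem sdist_neg_of_mem_interior (hE : Eᶜ.Nonempty) (hx : x ∈ interior E) : sdist d E x < 0 := by
  rw [← neg_pos, ← sdist_compl]
  exact sdist_pos_of_notMem_closure hE (by rwa [closure_compl, notMem_compl_iff])

end SignedDistance

namespace IsMinimizer

variable {d : ℕ} {P : GenPerimeter d} {R h : ℝ} {E F F' : Set (Cyl d)} {lam : ℝ}

theorem P_ne_top (hF : IsMinimizer d P R h E F) (hF' : F' ∈ MR d R) (hPF' : P.P F' ≠ ⊤) :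
    P.P F ≠ ⊤ := by
  intro htop
  have hle := hF.2 F' hF'
  simp only [Ftilde, htop, EReal.coe_ennreal_top, EReal.top_add_coe, top_le_iff] at hle
  rw [← EReal.coe_ennreal_toReal hPF', ← EReal.coe_add] at hle
  exact EReal.coe_ne_top _ hle

theorem setIntegral_sdist_le (hh : 0 < h) (hF : IsMinimizer d P R h E F) (hPF : P.P F ≠ ⊤)
    (hF' : F' ∈ MR d R) (hP : P.P F' ≤ P.P F) :
    ∫ x in F ∩ SlabR d R, sdist d E x ≤ ∫ x in F' ∩ SlabR d R, sdist d E x := by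
  have hle := hF.2 F' hF'
  rw [Ftilde, Ftilde, ← EReal.coe_ennreal_toReal hPF,
    ← EReal.coe_ennreal_toReal (ne_top_of_le_ne_top hPF hP), ← EReal.coe_add, ← EReal.coe_add,
    EReal.coe_le_coe_iff] at hle
  have hP_real : (P.P F').toReal ≤ (P.P F).toReal := ENNReal.toReal_mono hPF hP
  exact le_of_mul_le_mul_left (a := 1 / h) (by linarith) (one_div_pos.2 hh)

theorem setIntegral_sdist_halfspace_diff_nonneg (hh : 0 < h) (hF : IsMinimizer d P R h E F)
    (hlam : lam ∈ Icc (-R) R) :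
    0 ≤ ∫ x in (halfspace d lam \ F) ∩ SlabR d R, sdist d E x := by
  have hH : halfspace d lam ∈ MR d R := halfspace_mem_MR hlam
  have hle := hF.setIntegral_sdist_le hh (hF.P_ne_top hH (P.P_halfspace_ne_top lam))
    (supClosed_MR d R hF.1 hH) (P.P_union_halfspace_le hF.1 hlam)
  have hsplit : (halfspace d lam \ F) ∩ SlabR d R =
      ((F ∪ halfspace d lam) ∩ SlabR d R) \ (F ∩ SlabR d R) := by grind
  rw [hsplit, setIntegral_sdiff (hF.1.1.inter (measurableSet_slabR d R))
    ((integrableOn_sdist_slabR d E R).mono_set inter_subset_right)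
    (inter_subset_inter_left _ subset_union_left)]
  exact sub_nonneg.2 hle

theorem setIntegral_sdist_diff_halfspace_nonpos (hh : 0 < h) (hF : IsMinimizer d P R h E F)
    (hlam : lam ∈ Icc (-R) R) :
    ∫ x in (F \ halfspace d lam) ∩ SlabR d R, sdist d E x ≤ 0 := by
  have hH : halfspace d lam ∈ MR d R := halfspace_mem_MR hlam
  have hle := hF.setIntegral_sdist_le hh (hF.P_ne_top hH (P.P_halfspace_ne_top lam))
    (infClosed_MR d R hF.1 hH) (P.P_inter_halfspace_le hF.1 hlam)
  have hsplit : (F \ halfspace d lam) ∩ SlabR d R =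
      (F ∩ SlabR d R) \ ((F ∩ halfspace d lam) ∩ SlabR d R) := by grind
  rw [hsplit, setIntegral_sdiff
    ((hF.1.1.inter (measurableSet_halfspace d lam)).inter (measurableSet_slabR d R))
    ((integrableOn_sdist_slabR d E R).mono_set inter_subset_right)
    (inter_subset_inter_left _ inter_subset_left)]
  exact sub_nonpos.2 hle

theorem volume_halfspace_diff (hh : 0 < h) (hF : IsMinimizer d P R h E F) (hE : Eᶜ.Nonempty)
    (hlam : lam ∈ Icc (-R) R) (hHE : halfspace d lam ⊆ E) : volume (halfspace d lam \ F) = 0 := by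
  have hopen : IsOpen (halfspace d lam) := isOpen_lt continuous_snd continuous_const
  have hmeas : MeasurableSet ((halfspace d lam \ F) ∩ SlabR d R) :=
    ((measurableSet_halfspace d lam).diff hF.1.1).inter (measurableSet_slabR d R)
  have hslab : volume ((halfspace d lam \ F) ∩ SlabR d R) = 0 := by
    refine measure_eq_zero_of_setIntegral_nonpos (f := fun x => -sdist d E x) ?_
      ((integrableOn_sdist_slabR d E R).mono_set inter_subset_right).neg ?_
    · filter_upwards [ae_restrict_mem hmeas] with x hx
      exact neg_pos.2 (sdist_neg_of_mem_interior hE (interior_maximal hHE hopen hx.1.1))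
    · rw [integral_neg, neg_nonpos]
      exact hF.setIntegral_sdist_halfspace_diff_nonneg hh hlam
  refine (measure_congr ?_).trans hslab
  filter_upwards [ae_prod_snd_ne (volume : Measure (Torus d)) (-R)] with x hx_ne
  refine propext ⟨fun hx => ⟨hx, ?_, hx.1.trans_le hlam.2⟩, fun hx => hx.1⟩
  exact lt_of_le_of_ne (not_lt.1 fun hlt => hx.2 (hF.1.2.1 hlt)) hx_ne.symm

theorem volume_diff_halfspace (hh : 0 < h) (hF : IsMinimizer d P R h E F) (hE : E.Nonempty)
    (hlam : lam ∈ Icc (-R) R) (hEH : E ⊆ halfspace d lam) : volume (F \ halfspace d lam) = 0 := by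
  have hclosure : closure E ⊆ {x | x.2 ≤ lam} :=
    closure_minimal (fun x hx => (show x.2 < lam from hEH hx).le)
      (isClosed_le continuous_snd continuous_const)
  have hmeas : MeasurableSet ((F \ halfspace d lam) ∩ SlabR d R) :=
    (hF.1.1.diff (measurableSet_halfspace d lam)).inter (measurableSet_slabR d R)
  have hoff_plane : ∀ᵐ x : Cyl d, x.2 ≠ lam := ae_prod_snd_ne _ lam
  have hslab : volume ((F \ halfspace d lam) ∩ SlabR d R) = 0 := by
    refine measure_eq_zero_of_setIntegral_nonpos ?_
      ((integrableOn_sdist_slabR d E R).mono_set inter_subset_right)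
      (hF.setIntegral_sdist_diff_halfspace_nonpos hh hlam)
    filter_upwards [ae_restrict_mem hmeas, ae_restrict_of_ae hoff_plane] with x hx hx_ne
    exact sdist_pos_of_notMem_closure hE fun hcl =>
      hx.1.2 (lt_of_le_of_ne (hclosure hcl) hx_ne)
  refine (measure_congr ?_).trans hslab
  filter_upwards [hoff_plane] with x hx_ne
  refine propext ⟨fun hx => ⟨hx, ?_, hF.1.2.2 hx.1⟩, fun hx => hx.1⟩
  exact hlam.1.trans_lt (lt_of_le_of_ne (not_lt.1 hx.2) hx_ne.symm)

end IsMinimizer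

theorem exists_mem_MR_volume_symmDiff_eq_zero {d : ℕ} {r : ℝ} {F : Set (Cyl d)} (hr : 0 ≤ r)
    (hF : MeasurableSet F) (hlower : volume (halfspace d (-r) \ F) = 0)
    (hupper : volume (F \ halfspace d r) = 0) : ∃ F' ∈ MR d r, volume (symmDiff F F') = 0 := by
  refine ⟨(F ∪ halfspace d (-r)) ∩ halfspace d r,
    ⟨(hF.union (measurableSet_halfspace d _)).inter (measurableSet_halfspace d _),
      fun x hx => ⟨Or.inr hx, hx.trans_le (neg_le_self hr)⟩, inter_subset_right⟩,
    measure_mono_null (fun x hx => ?_) (measure_union_null hlower hupper)⟩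
  simp only [mem_symmDiff, mem_inter_iff, mem_union, Set.mem_sdiff] at hx ⊢
  tauto

theorem minimizer_squeezed_by_halfspaces_general {d : ℕ} {P : GenPerimeter d} {R h : ℝ}
    (hh : 0 < h) {E : Set (Cyl d)} (hE : E ∈ MR d R) {F : Set (Cyl d)}
    (hF : IsMinimizer d P R h E F) :
    (∀ lam ∈ Icc (-R) R,
      (halfspace d lam ⊆ E → volume (halfspace d lam \ F) = 0) ∧
      (E ⊆ halfspace d lam → volume (F \ halfspace d lam) = 0)) ∧
    (∀ r : ℝ, 0 ≤ r → r ≤ R → E ∈ MR d r →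
      ∃ F' ∈ MR d r, volume (symmDiff F F') = 0) := by
  have hlower {lam : ℝ} (hlam : lam ∈ Icc (-R) R) :=
    hF.volume_halfspace_diff hh (compl_nonempty_of_mem_MR hE) hlam
  have hupper {lam : ℝ} (hlam : lam ∈ Icc (-R) R) :=
    hF.volume_diff_halfspace hh (nonempty_of_mem_MR hE) hlam
  refine ⟨fun lam hlam => ⟨hlower hlam, hupper hlam⟩, fun r hr hrR hEr => ?_⟩
  exact exists_mem_MR_volume_symmDiff_eq_zero hr hF.1.1
    (hlower ⟨by linarith, by linarith⟩ hEr.2.1) (hupper ⟨by linarith, hrR⟩ hEr.2.2)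

/-- Minimizers of the incremental problem are squeezed between the halfspaces that
squeeze the datum `E`; in particular they stay in `𝔐_r` (up to null sets) if `E ∈ 𝔐_r`. -/
theorem minimizer_squeezed_by_halfspaces (d : ℕ) (hd : 2 ≤ d) (P : GenPerimeter d)
    (R h : ℝ) (hR : 0 < R) (hh : 0 < h) (E : Set (Cyl d)) (hE : E ∈ MR d R)
    (hPE : P.P E < ⊤) (F : Set (Cyl d)) (hF : IsMinimizer d P R h E F) :
    (∀ lam ∈ Set.Ioo (-R) R,
      (halfspace d lam ⊆ E → volume (halfspace d lam \ F) = 0) ∧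
      (E ⊆ halfspace d lam → volume (F \ halfspace d lam) = 0)) ∧
    (∀ r : ℝ, 0 < r → r ≤ R → E ∈ MR d r →
      ∃ F' ∈ MR d r, volume (symmDiff F F') = 0) := by
  obtain ⟨hsqueeze, hMR⟩ := minimizer_squeezed_by_halfspaces_general hh hE hF
  exact ⟨fun lam hlam => hsqueeze lam (Ioo_subset_Icc_self hlam), fun r hr => hMR r hr.le⟩
end
end

section
/- Let 𝒫 be a generalized perimeter, L > 0, R > 0, E₀ ∈ 𝔠_L ∩ 𝔐_R, and let {h_n}_{n∈ℕ} ⊂ (0,+∞) be a monotonically vanishing sequence. For each n let {E^{(h_n)}_t}_{t ≥ 0} be the approximate flat solution with initial datum E₀ and time step h_n. Then there exist a subsequence {h_k} and a family {E^0_t}_{t ≥ 0} ⊆ 𝔠_L with E^0_0 = E₀ such that |E^{(h_k)}_t Δ E^0_t| → 0 as k → ∞ for every t ≥ 0, and |E^0_t Δ E^0_s| ≤ C |t−s|^{1/2} for every s, t ≥ 0, where C depends only on d, L and 𝒫(E₀). -/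
open MeasureTheory Filter Set
open scoped ENNReal

noncomputable section

/-- The discrete-in-time approximate flat solution with time step `h`, initial datum `E₀`:
`Eh k` is the set at time `k h`; each step is the (unique, Lipschitz-subgraph) minimizer of
the incremental problem. -/
def IsApproxFlow (d : ℕ) (P : GenPerimeter d) (L R h : ℝ) (E₀ : Set (Cyl d))
    (Eh : ℕ → Set (Cyl d)) : Prop :=
  Eh 0 = E₀ ∧ ∀ k : ℕ, Eh (k+1) ∈ LipClass d L ∧ IsMinimizer d P R h (Eh k) (Eh (k+1))

open scoped NNReal Topology symmDiff

/-!
Comparing a minimizer with its predecessor gives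
`𝒫(E_{k+1}) + (1/h) ∫_{E_{k+1} ∆ E_k} |sdist_{E_k}| ≤ 𝒫(E_k)`.
The height of a point above an `L`-Lipschitz graph is at most `1 + L` times its distance to the
graph, so integrating over vertical fibres bounds the dissipation below by a multiple of
`‖g_{k+1} - g_k‖²_{L²}`, hence of `|E_{k+1} ∆ E_k|²`, where the `g_k` are the heights of the `E_k`.
Summing over the steps, Cauchy–Schwarz makes the flows `1/2`-Hölder in `L¹` up to an error that
vanishes with `h`. By Arzelà–Ascoli the heights stay in a compact subset of `L¹`, and a diagonal
argument over a countable dense set of times yields the limit.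
-/

section Metric

variable {Y : Type*} [PseudoMetricSpace Y]

theorem dist_sq_le_of_dist_succ_sq_le {u : ℕ → Y} {p : ℕ → ℝ} {c : ℝ}
    (hstep : ∀ k, dist (u k) (u (k + 1)) ^ 2 ≤ c * (p k - p (k + 1))) {m n : ℕ} (hmn : m ≤ n) :
    dist (u m) (u n) ^ 2 ≤ c * (n - m) * (p m - p n) :=
  calc
    dist (u m) (u n) ^ 2 ≤ (∑ k ∈ Finset.Ico m n, dist (u k) (u (k + 1))) ^ 2 := by
      gcongr
      exact dist_le_Ico_sum_dist u hmn
    _ ≤ (n - m) * ∑ k ∈ Finset.Ico m n, dist (u k) (u (k + 1)) ^ 2 := by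
      simpa [Nat.cast_sub hmn] using sq_sum_le_card_mul_sum_sq (s := Finset.Ico m n)
        (f := fun k ↦ dist (u k) (u (k + 1)))
    _ ≤ (n - m) * ∑ k ∈ Finset.Ico m n, c * (p k - p (k + 1)) := by
      have : (m : ℝ) ≤ n := mod_cast hmn
      gcongr with k
      exact hstep k
    _ = c * (n - m) * (p m - p n) := by
      have htelescope : ∑ k ∈ Finset.Ico m n, (p k - p (k + 1)) = p m - p n := by
        simpa using congrArg Neg.neg (Finset.sum_Ico_sub p hmn)
      rw [← Finset.mul_sum, htelescope]
      ring

theorem floor_div_sub_floor_div_mul_le {h s t : ℝ} (hh : 0 < h) (ht : 0 ≤ t) :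
    (⌊t / h⌋₊ - ⌊s / h⌋₊ : ℝ) * h ≤ t - s + h := by
  have hfloor_t : ⌊t / h⌋₊ * h ≤ t := (le_div_iff₀ hh).1 (Nat.floor_le (by positivity))
  have hfloor_s : s < (⌊s / h⌋₊ + 1) * h := (div_lt_iff₀ hh).1 (Nat.lt_floor_add_one _)
  linarith

theorem dist_floor_div_le {u : ℕ → Y} {p : ℕ → ℝ} {c h : ℝ} (hc : 0 ≤ c) (hh : 0 < h)
    (hp : Antitone p) (hp0 : ∀ k, 0 ≤ p k)
    (hstep : ∀ k, dist (u k) (u (k + 1)) ^ 2 ≤ c * h * (p k - p (k + 1))) (s t : ℝ≥0) :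
    dist (u ⌊s / h⌋₊) (u ⌊t / h⌋₊) ≤ √(c * p 0 * (dist s t + h)) := by
  wlog hst : s ≤ t generalizing s t
  · simpa only [dist_comm] using this t s (le_of_not_ge hst)
  have hfloor : ⌊s / h⌋₊ ≤ ⌊t / h⌋₊ := Nat.floor_mono (by gcongr)
  have hdist : dist s t = t - s := by
    rw [dist_comm, NNReal.dist_eq, abs_of_nonneg (sub_nonneg.2 (mod_cast hst))]
  have hdrop : p ⌊s / h⌋₊ - p ⌊t / h⌋₊ ≤ p 0 := by
    linarith [hp (Nat.zero_le ⌊s / h⌋₊), hp0 ⌊t / h⌋₊]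
  have hsub : (0 : ℝ) ≤ ⌊t / h⌋₊ - ⌊s / h⌋₊ := sub_nonneg.2 (mod_cast hfloor)
  have := hp0 0
  refine Real.le_sqrt_of_sq_le ?_
  calc
    dist (u ⌊s / h⌋₊) (u ⌊t / h⌋₊) ^ 2
      ≤ c * h * (⌊t / h⌋₊ - ⌊s / h⌋₊) * (p ⌊s / h⌋₊ - p ⌊t / h⌋₊) :=
      dist_sq_le_of_dist_succ_sq_le hstep hfloor
    _ ≤ c * h * (⌊t / h⌋₊ - ⌊s / h⌋₊) * p 0 := by gcongr
    _ = c * p 0 * ((⌊t / h⌋₊ - ⌊s / h⌋₊) * h) := by ring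
    _ ≤ c * p 0 * (dist s t + h) := by
      rw [hdist]
      gcongr
      exact floor_div_sub_floor_div_mul_le hh t.2

variable {T : Type*} [TopologicalSpace T] {u : ℕ → T → Y} {ω : ℕ → T → T → ℝ} {ρ : T → T → ℝ}

theorem cauchySeq_of_dist_le_of_dense (hdist : ∀ n s t, dist (u n s) (u n t) ≤ ω n s t)
    (hω : ∀ s t, Tendsto (ω · s t) atTop (𝓝 (ρ s t))) {t : T} (hρ : Tendsto (ρ t) (𝓝 t) (𝓝 0))
    {S : Set T} (hS : Dense S) (hcauchy : ∀ s ∈ S, CauchySeq (u · s)) : CauchySeq (u · t) := by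
  refine Metric.cauchySeq_iff.2 fun ε hε ↦ ?_
  obtain ⟨s, hsS, hts⟩ : (S ∩ {s | ρ t s < ε / 3}).Nonempty :=
    hS.inter_nhds_nonempty (hρ.eventually_lt_const (by positivity))
  obtain ⟨N, hN⟩ := eventually_atTop.1 ((hω t s).eventually_lt_const hts)
  obtain ⟨M, hM⟩ := Metric.cauchySeq_iff.1 (hcauchy s hsS) (ε / 3) (by positivity)
  refine ⟨max N M, fun m hm n hn ↦ ?_⟩
  obtain ⟨hNm, hMm⟩ := max_le_iff.1 hm
  obtain ⟨hNn, hMn⟩ := max_le_iff.1 hn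
  have hm_near : dist (u m t) (u m s) < ε / 3 := (hdist m t s).trans_lt (hN m hNm)
  have hn_near : dist (u n t) (u n s) < ε / 3 := (hdist n t s).trans_lt (hN n hNn)
  calc
    dist (u m t) (u n t) ≤ dist (u m t) (u m s) + dist (u m s) (u n s) + dist (u n s) (u n t) :=
      dist_triangle4 _ _ _ _
    _ < ε := by linarith [hM m hMm n hMn, dist_comm (u n s) (u n t)]

theorem exists_subseq_tendsto_of_dist_le [TopologicalSpace.SeparableSpace T] {K : Set Y}
    (hK : IsCompact K) (hu : ∀ n t, u n t ∈ K)
    (hdist : ∀ n s t, dist (u n s) (u n t) ≤ ω n s t)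
    (hω : ∀ s t, Tendsto (ω · s t) atTop (𝓝 (ρ s t)))
    (hρ : ∀ t, Tendsto (ρ t) (𝓝 t) (𝓝 0)) :
    ∃ φ : ℕ → ℕ, StrictMono φ ∧ ∃ v : T → Y, (∀ t, v t ∈ K) ∧
      (∀ t, Tendsto (fun k ↦ u (φ k) t) atTop (𝓝 (v t))) ∧ ∀ s t, dist (v s) (v t) ≤ ρ s t := by
  obtain ⟨S, hScount, hSdense⟩ := TopologicalSpace.exists_countable_dense T
  have := hScount.to_subtype
  obtain ⟨w, -, φ, hφ, hw⟩ := (isCompact_univ_pi fun _ : S ↦ hK).tendsto_subseq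
    (x := fun n (s : S) ↦ u n s) fun n s _ ↦ hu n s
  have hωφ : ∀ s t, Tendsto (fun k ↦ ω (φ k) s t) atTop (𝓝 (ρ s t)) :=
    fun s t ↦ (hω s t).comp hφ.tendsto_atTop
  have hlim : ∀ t, ∃ y ∈ K, Tendsto (fun k ↦ u (φ k) t) atTop (𝓝 y) := fun t ↦
    cauchySeq_tendsto_of_isComplete hK.isComplete (fun k ↦ hu (φ k) t) <|
      cauchySeq_of_dist_le_of_dense (fun k ↦ hdist (φ k)) hωφ (hρ t) hSdense fun s hs ↦
        (tendsto_pi_nhds.1 hw ⟨s, hs⟩).cauchySeq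
  choose v hvK hv using hlim
  exact ⟨φ, hφ, v, hvK, hv, fun s t ↦
    le_of_tendsto_of_tendsto' ((hv s).dist (hv t)) (hωφ s t) fun k ↦ hdist (φ k) s t⟩

end Metric

section SignedDistance

/-- The signed distance from `E`, positive outside `E` and negative inside; the version of `sdist`
for an arbitrary metric space. -/
def signedInfDist {Y : Type*} [PseudoMetricSpace Y] (E : Set Y) (y : Y) : ℝ :=
  Metric.infDist y E - Metric.infDist y Eᶜ

variable {Y : Type*} [PseudoMetricSpace Y] {E : Set Y} {y : Y}

theorem continuous_signedInfDist (E : Set Y) : Continuous (signedInfDist E) :=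
  (Metric.continuous_infDist_pt E).sub (Metric.continuous_infDist_pt Eᶜ)

theorem signedInfDist_of_mem (hy : y ∈ E) : signedInfDist E y = -Metric.infDist y Eᶜ := by
  rw [signedInfDist, Metric.infDist_zero_of_mem hy, zero_sub]

theorem signedInfDist_of_notMem (hy : y ∉ E) : signedInfDist E y = Metric.infDist y E := by
  rw [signedInfDist, Metric.infDist_zero_of_mem (mem_compl hy), sub_zero]

theorem le_mul_infDist_of_lipschitzWith {Φ : Y → ℝ} {C : ℝ≥0} (hΦ : LipschitzWith C Φ)
    (hE : E.Nonempty) (hΦE : ∀ z ∈ E, Φ z ≤ 0) (y : Y) : Φ y ≤ C * Metric.infDist y E := by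
  have := hE.to_subtype
  rw [Metric.infDist_eq_iInf, Real.mul_iInf_of_nonneg C.coe_nonneg]
  refine le_ciInf fun z ↦ ?_
  linarith [hΦ.le_add_mul y z, hΦE z z.2]

theorem abs_le_mul_abs_signedInfDist {Φ : Y → ℝ} {C : ℝ≥0} (hΦ : LipschitzWith C Φ)
    (hE : E.Nonempty) (hEc : Eᶜ.Nonempty) (hmem : ∀ z ∈ E, Φ z ≤ 0) (hnotMem : ∀ z ∉ E, 0 ≤ Φ z)
    (y : Y) : |Φ y| ≤ C * |signedInfDist E y| := by
  by_cases hy : y ∈ E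
  · rw [abs_of_nonpos (hmem y hy), signedInfDist_of_mem hy, abs_neg,
      abs_of_nonneg Metric.infDist_nonneg]
    exact le_mul_infDist_of_lipschitzWith hΦ.neg hEc (fun z hz ↦ neg_nonpos.2 (hnotMem z hz)) y
  · rw [abs_of_nonneg (hnotMem y hy), signedInfDist_of_notMem hy,
      abs_of_nonneg Metric.infDist_nonneg]
    exact le_mul_infDist_of_lipschitzWith hΦ hE hmem y

end SignedDistance

section Integral

variable {α : Type*} [MeasurableSpace α] {μ : Measure α}

theorem setIntegral_sub_setIntegral_eq_setIntegral_abs_symmDiff {A B : Set α} {s : α → ℝ}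
    (hA : MeasurableSet A) (hB : MeasurableSet B) (hsA : IntegrableOn s A μ)
    (hsB : IntegrableOn s B μ) (hnonneg : ∀ x ∈ A \ B, 0 ≤ s x) (hnonpos : ∀ x ∈ B \ A, s x ≤ 0) :
    ∫ x in A, s x ∂μ - ∫ x in B, s x ∂μ = ∫ x in A ∆ B, |s x| ∂μ := by
  have hAB : ∫ x in A \ B, |s x| ∂μ = ∫ x in A \ B, s x ∂μ :=
    setIntegral_congr_fun (hA.diff hB) fun x hx ↦ abs_of_nonneg (hnonneg x hx)
  have hBA : ∫ x in B \ A, |s x| ∂μ = -∫ x in B \ A, s x ∂μ := by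
    rw [← integral_neg]
    exact setIntegral_congr_fun (hB.diff hA) fun x hx ↦ abs_of_nonpos (hnonpos x hx)
  rw [Set.symmDiff_def, setIntegral_union disjoint_sdiff_sdiff (hB.diff hA)
      (hsA.mono_set sdiff_subset).abs (hsB.mono_set sdiff_subset).abs, hAB, hBA,
    ← integral_inter_add_sdiff hB hsA, ← integral_inter_add_sdiff hA hsB, inter_comm B A]
  ring

theorem sq_integral_abs_le [IsFiniteMeasure μ] {f : α → ℝ} (hf : MemLp f 2 μ) :
    (∫ x, |f x| ∂μ) ^ 2 ≤ μ.real univ * ∫ x, f x ^ 2 ∂μ := by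
  have hf2 : MemLp f (ENNReal.ofReal 2) μ := by simpa using hf
  have holder := integral_mul_le_Lp_mul_Lq_of_nonneg Real.HolderConjugate.two_two
    (ae_of_all μ fun x ↦ abs_nonneg (f x)) (ae_of_all μ fun _ ↦ zero_le_one)
    hf2.abs (memLp_const (1 : ℝ))
  simp only [mul_one, Real.rpow_two, sq_abs, one_pow, integral_const, smul_eq_mul,
    ← Real.sqrt_eq_rpow] at holder
  calc
    (∫ x, |f x| ∂μ) ^ 2 ≤ (√(∫ x, f x ^ 2 ∂μ) * √(μ.real univ)) ^ 2 := by gcongr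
    _ = μ.real univ * ∫ x, f x ^ 2 ∂μ := by
      rw [mul_pow, Real.sq_sqrt (integral_nonneg fun x ↦ sq_nonneg _), Real.sq_sqrt (by positivity),
        mul_comm]

end Integral

section Hypograph

/-- The points on or below the graph of `g`; the version of `subgraph` for an arbitrary base `X`. -/
def hypograph {X : Type*} (g : X → ℝ) : Set (X × ℝ) := {p | p.2 ≤ g p.1}

variable {X : Type*} {f g : X → ℝ} {R : ℝ}

theorem hypograph_injective : Function.Injective (hypograph (X := X)) := fun _ _ hfg ↦
  funext fun x ↦ eq_of_forall_le_iff fun y ↦ Set.ext_iff.1 hfg (x, y)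

theorem nonempty_hypograph [Nonempty X] (g : X → ℝ) : (hypograph g).Nonempty :=
  ‹Nonempty X›.elim fun x ↦ ⟨(x, g x), le_refl (g x)⟩

theorem nonempty_compl_hypograph [Nonempty X] (g : X → ℝ) : (hypograph g)ᶜ.Nonempty :=
  ‹Nonempty X›.elim fun x ↦ ⟨(x, g x + 1), (lt_add_one (g x)).not_ge⟩

theorem preimage_mk_symmDiff_hypograph (f g : X → ℝ) (x : X) :
    Prod.mk x ⁻¹' (hypograph f ∆ hypograph g) = uIoc (g x) (f x) := by
  ext y
  simp only [hypograph, mem_preimage, mem_symmDiff, mem_ofPred_eq, mem_uIoc, not_le]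
  grind

theorem symmDiff_hypograph_subset (hf : ∀ x, f x ∈ Ico (-R) R) (hg : ∀ x, g x ∈ Ico (-R) R) :
    hypograph f ∆ hypograph g ⊆ Prod.snd ⁻¹' Ioo (-R) R := by
  rintro ⟨x, y⟩ hxy
  have hy : y ∈ uIoc (g x) (f x) := preimage_mk_symmDiff_hypograph f g x ▸ hxy
  simp only [mem_preimage, mem_Ioo, mem_uIoc, mem_Ico] at *
  grind

theorem abs_sub_le_mul_abs_signedInfDist_hypograph [PseudoMetricSpace X] {K : ℝ≥0}
    (hg : LipschitzWith K g) (p : X × ℝ) :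
    |p.2 - g p.1| ≤ (1 + K) * |signedInfDist (hypograph g) p| := by
  have : Nonempty X := ⟨p.1⟩
  have hheight : LipschitzWith (1 + K) fun q : X × ℝ ↦ q.2 - g q.1 := by
    simpa only [mul_one] using! LipschitzWith.prod_snd.sub (hg.comp LipschitzWith.prod_fst)
  simpa only [NNReal.coe_add, NNReal.coe_one] using abs_le_mul_abs_signedInfDist hheight
    (nonempty_hypograph g) (nonempty_compl_hypograph g) (fun q hq ↦ sub_nonpos.2 hq)
    (fun q hq ↦ (sub_pos.2 (not_le.1 hq)).le) p

theorem measurableSet_hypograph [MeasurableSpace X] (hg : Measurable g) :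
    MeasurableSet (hypograph g) :=
  measurableSet_le measurable_snd (hg.comp measurable_fst)

theorem measurableSet_symmDiff_hypograph [TopologicalSpace X] [MeasurableSpace X]
    [OpensMeasurableSpace X] (f g : C(X, ℝ)) : MeasurableSet (hypograph f ∆ hypograph g) :=
  (measurableSet_hypograph f.measurable).symmDiff (measurableSet_hypograph g.measurable)

end Hypograph

section L1

/-- The `K`-Lipschitz functions with values in `[-R, R]`, a compact class of continuous functions
that contains the heights of all the sets of a flow. -/
def lipschitzMaps (X : Type*) [PseudoMetricSpace X] (K : ℝ≥0) (R : ℝ) : Set C(X, ℝ) :=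
  {f | LipschitzWith K f ∧ ∀ x, f x ∈ Icc (-R) R}

theorem isCompact_lipschitzMaps {X : Type*} [PseudoMetricSpace X] (K : ℝ≥0) (R : ℝ) :
    IsCompact (lipschitzMaps X K R) := by
  refine ArzelaAscoli.isCompact_of_equicontinuous _ ?_
    (LipschitzWith.uniformEquicontinuous _ K fun f ↦ f.2.1).equicontinuous
  have himage : ContinuousMap.toFun '' lipschitzMaps X K R =
      {f | LipschitzWith K f} ∩ univ.pi fun _ ↦ Icc (-R) R := by
    ext f
    simp only [lipschitzMaps, mem_image, mem_ofPred_eq, mem_inter_iff, mem_univ_pi]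
    exact ⟨fun ⟨_, hg, hgf⟩ ↦ hgf ▸ hg, fun hf ↦ ⟨⟨f, hf.1.continuous⟩, hf, rfl⟩⟩
  rw [himage]
  exact (isCompact_univ_pi fun _ ↦ isCompact_Icc).inter_left (isClosed_setOfPred_lipschitzWith K)

variable {X : Type*} [MetricSpace X] [CompactSpace X] [MeasureSpace X] [BorelSpace X]
  [IsFiniteMeasure (volume : Measure X)]

theorem integrableOn_preimage_snd {φ : X × ℝ → ℝ} (hφ : Continuous φ) {S : Set ℝ}
    (hS : Bornology.IsBounded S) : IntegrableOn φ (Prod.snd ⁻¹' S) :=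
  (hφ.continuousOn.integrableOn_compact (isCompact_univ.prod hS.isCompact_closure)).mono_set
    fun _ hp ↦ ⟨mem_univ _, subset_closure hp⟩

theorem integrableOn_symmDiff_hypograph {φ : X × ℝ → ℝ} (hφ : Continuous φ) (f g : C(X, ℝ)) :
    IntegrableOn φ (hypograph f ∆ hypograph g) := by
  let R := max ‖f‖ ‖g‖ + 1
  have hf (x : X) : f x ∈ Ico (-R) R := by
    have := abs_le.1 ((f.norm_coe_le_norm x).trans (le_max_left ‖f‖ ‖g‖))
    exact ⟨by linarith, by linarith⟩
  have hg (x : X) : g x ∈ Ico (-R) R := by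
    have := abs_le.1 ((g.norm_coe_le_norm x).trans (le_max_right ‖f‖ ‖g‖))
    exact ⟨by linarith, by linarith⟩
  exact (integrableOn_preimage_snd hφ (Metric.isBounded_Ioo _ _)).mono_set
    (symmDiff_hypograph_subset hf hg)

/-- The class of a continuous function in `L¹`, where distances between functions are the volumes
of the symmetric differences of their hypographs. -/
def toL1 : C(X, ℝ) →L[ℝ] X →₁[volume] ℝ :=
  ContinuousMap.toLp 1 volume ℝ

theorem dist_toL1 (f g : C(X, ℝ)) : dist (toL1 f) (toL1 g) = ∫ x, |f x - g x| := by
  rw [dist_eq_norm, ← map_sub, L1.norm_eq_integral_norm]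
  refine integral_congr_ae ?_
  filter_upwards [ContinuousMap.coeFn_toLp (p := 1) volume (𝕜 := ℝ) (f - g)] with x hx
  simpa only [Real.norm_eq_abs] using! congrArg abs hx

theorem volume_symmDiff_hypograph (f g : C(X, ℝ)) :
    volume (hypograph f ∆ hypograph g) = edist (toL1 f) (toL1 g) := by
  have hint : Integrable fun x ↦ |f x - g x| :=
    Continuous.integrable_of_hasCompactSupport (by fun_prop) (.of_compactSpace _)
  rw [edist_dist, dist_toL1,
    ofReal_integral_eq_lintegral_ofReal hint (ae_of_all _ fun _ ↦ abs_nonneg _),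
    Measure.volume_eq_prod, Measure.prod_apply (measurableSet_symmDiff_hypograph f g)]
  simp only [preimage_mk_symmDiff_hypograph, Real.volume_uIoc]

theorem setIntegral_symmDiff_hypograph (f g : C(X, ℝ)) :
    ∫ p in hypograph f ∆ hypograph g, |p.2 - g p.1| = (∫ x, (f x - g x) ^ 2) / 2 := by
  have hmeas := measurableSet_symmDiff_hypograph f g
  have hint : IntegrableOn (fun p : X × ℝ ↦ |p.2 - g p.1|) (hypograph f ∆ hypograph g) :=
    integrableOn_symmDiff_hypograph (by fun_prop) f g
  rw [← integral_indicator hmeas, Measure.volume_eq_prod,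
    integral_prod _ (hint.integrable_indicator hmeas), ← integral_div]
  refine integral_congr_ae (ae_of_all _ fun x ↦ ?_)
  calc
    ∫ y, (hypograph f ∆ hypograph g).indicator (fun p ↦ |p.2 - g p.1|) (x, y)
      = ∫ y in uIoc (g x) (f x), |y - g x| := by
      rw [← preimage_mk_symmDiff_hypograph, ← integral_indicator (measurable_prodMk_left hmeas)]
      rfl
    _ = (f x - g x) ^ 2 / 2 := by
      simpa [one_add_one_eq_two] using integral_pow_abs_sub_uIoc (a := g x) (b := f x) 1

theorem dist_toL1_sq_le (f : C(X, ℝ)) {g : C(X, ℝ)} {K : ℝ≥0} (hg : LipschitzWith K g) :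
    dist (toL1 f) (toL1 g) ^ 2 ≤ 2 * (1 + K) * volume.real (univ : Set X) *
      ∫ p in hypograph f ∆ hypograph g, |signedInfDist (hypograph g) p| := by
  have hs := continuous_signedInfDist (hypograph g)
  have hheight : ∫ p in hypograph f ∆ hypograph g, |p.2 - g p.1| ≤
      (1 + K) * ∫ p in hypograph f ∆ hypograph g, |signedInfDist (hypograph g) p| := by
    rw [← integral_const_mul]
    exact integral_mono (integrableOn_symmDiff_hypograph (by fun_prop) f g)
      (integrableOn_symmDiff_hypograph (by fun_prop) f g)
      (abs_sub_le_mul_abs_signedInfDist_hypograph hg)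
  have hL2 : MemLp (f - g) 2 (volume : Measure X) :=
    (f - g).continuous.memLp_of_hasCompactSupport (.of_compactSpace _)
  calc
    dist (toL1 f) (toL1 g) ^ 2 ≤ volume.real (univ : Set X) * ∫ x, (f x - g x) ^ 2 := by
      rw [dist_toL1]
      exact sq_integral_abs_le hL2
    _ = 2 * volume.real (univ : Set X) * ∫ p in hypograph f ∆ hypograph g, |p.2 - g p.1| := by
      rw [setIntegral_symmDiff_hypograph]
      ring
    _ ≤ 2 * volume.real (univ : Set X) *
        ((1 + K) * ∫ p in hypograph f ∆ hypograph g, |signedInfDist (hypograph g) p|) := by gcongr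
    _ = _ := by ring

theorem setIntegral_signedInfDist_hypograph_sub {f g : C(X, ℝ)} {R : ℝ}
    (hf : ∀ x, f x ∈ Ico (-R) R) (hg : ∀ x, g x ∈ Ico (-R) R) :
    (∫ p in hypograph f ∩ Prod.snd ⁻¹' Ioo (-R) R, signedInfDist (hypograph g) p) -
        ∫ p in hypograph g ∩ Prod.snd ⁻¹' Ioo (-R) R, signedInfDist (hypograph g) p =
      ∫ p in hypograph f ∆ hypograph g, |signedInfDist (hypograph g) p| := by
  have hslab : MeasurableSet (Prod.snd ⁻¹' Ioo (-R) R : Set (X × ℝ)) :=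
    measurable_snd measurableSet_Ioo
  have hint (A : Set (X × ℝ)) :
      IntegrableOn (signedInfDist (hypograph g)) (A ∩ Prod.snd ⁻¹' Ioo (-R) R) :=
    (integrableOn_preimage_snd (continuous_signedInfDist _) (Metric.isBounded_Ioo _ _)).mono_set
      inter_subset_right
  rw [setIntegral_sub_setIntegral_eq_setIntegral_abs_symmDiff
      ((measurableSet_hypograph f.measurable).inter hslab)
      ((measurableSet_hypograph g.measurable).inter hslab) (hint _) (hint _),
    ← inter_symmDiff_distrib_right, inter_eq_left.2 (symmDiff_hypograph_subset hf hg)]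
  · rintro p ⟨⟨-, hpR⟩, hp⟩
    rw [signedInfDist_of_notMem fun hpg ↦ hp ⟨hpg, hpR⟩]
    exact Metric.infDist_nonneg
  · rintro p ⟨⟨hp, -⟩, -⟩
    rw [signedInfDist_of_mem hp]
    exact neg_nonpos.2 Metric.infDist_nonneg

end L1

section Flow

variable {X : Type*} [MetricSpace X] [MeasureSpace X]

/-- The energy-dissipation inequality of a minimizing movement for `P` with time step `h`, for sets
encoded by their heights `g k`; it is all that compactness requires of the minimality of the
steps. -/
structure IsDissipativeFlow (P : Set (X × ℝ) → ℝ≥0∞) (K : ℝ≥0) (R h : ℝ) (g : ℕ → C(X, ℝ)) :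
    Prop where
  mem_lipschitzMaps : ∀ k, g k ∈ lipschitzMaps X K R
  energy_le : ∀ k, P (hypograph (g (k + 1))) + ENNReal.ofReal
    (1 / h * ∫ p in hypograph (g (k + 1)) ∆ hypograph (g k), |signedInfDist (hypograph (g k)) p|) ≤
      P (hypograph (g k))

namespace IsDissipativeFlow

variable {P : Set (X × ℝ) → ℝ≥0∞} {K : ℝ≥0} {R h : ℝ} {g : ℕ → C(X, ℝ)}

theorem antitone (hg : IsDissipativeFlow P K R h g) : Antitone fun k ↦ P (hypograph (g k)) :=
  antitone_nat_of_succ_le fun k ↦ le_self_add.trans (hg.energy_le k)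

theorem ne_top (hg : IsDissipativeFlow P K R h g) (hP : P (hypograph (g 0)) ≠ ⊤) (k : ℕ) :
    P (hypograph (g k)) ≠ ⊤ :=
  ne_top_of_le_ne_top hP (hg.antitone k.zero_le)

variable [CompactSpace X] [BorelSpace X] [IsFiniteMeasure (volume : Measure X)]

theorem dist_toL1_succ_sq_le (hg : IsDissipativeFlow P K R h g) (hh : 0 < h)
    (hP : P (hypograph (g 0)) ≠ ⊤) (k : ℕ) :
    dist (toL1 (g k)) (toL1 (g (k + 1))) ^ 2 ≤ 2 * (1 + K) * volume.real (univ : Set X) * h *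
      ((P (hypograph (g k))).toReal - (P (hypograph (g (k + 1)))).toReal) := by
  set D := ∫ p in hypograph (g (k + 1)) ∆ hypograph (g k), |signedInfDist (hypograph (g k)) p|
    with hD
  have : 0 ≤ D := integral_nonneg fun _ ↦ abs_nonneg _
  have henergy := ENNReal.toReal_mono (hg.ne_top hP k) (hg.energy_le k)
  rw [ENNReal.toReal_add (hg.ne_top hP (k + 1)) ENNReal.ofReal_ne_top,
    ENNReal.toReal_ofReal (by positivity), ← hD, one_div_mul_eq_div] at henergy
  have hdrop : D ≤ h * ((P (hypograph (g k))).toReal - (P (hypograph (g (k + 1)))).toReal) := by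
    rw [← div_le_iff₀' hh]
    linarith
  rw [dist_comm, mul_assoc _ h]
  exact (dist_toL1_sq_le (g (k + 1)) (hg.mem_lipschitzMaps k).1).trans (by gcongr)

theorem dist_toL1_floor_div_le (hg : IsDissipativeFlow P K R h g) (hh : 0 < h)
    (hP : P (hypograph (g 0)) ≠ ⊤) (s t : ℝ≥0) :
    dist (toL1 (g ⌊s / h⌋₊)) (toL1 (g ⌊t / h⌋₊)) ≤ √(2 * (1 + K) * volume.real (univ : Set X) *
      (P (hypograph (g 0))).toReal * (dist s t + h)) :=
  dist_floor_div_le (u := fun k ↦ toL1 (g k)) (by positivity) hh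
    (fun k _ hkl ↦ ENNReal.toReal_mono (hg.ne_top hP k) (hg.antitone hkl))
    (fun _ ↦ ENNReal.toReal_nonneg) (hg.dist_toL1_succ_sq_le hh hP) s t

end IsDissipativeFlow

theorem exists_flatFlow_general [CompactSpace X] [BorelSpace X]
    [IsFiniteMeasure (volume : Measure X)]
    {P : Set (X × ℝ) → ℝ≥0∞} {K : ℝ≥0} {R : ℝ} {h : ℕ → ℝ} {g : ℕ → ℕ → C(X, ℝ)} {g₀ : C(X, ℝ)}
    (hP : P (hypograph g₀) ≠ ⊤) (hpos : ∀ n, 0 < h n) (hlim : Tendsto h atTop (𝓝 0))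
    (hg : ∀ n, IsDissipativeFlow P K R (h n) (g n)) (hg₀ : ∀ n, g n 0 = g₀) :
    ∃ φ : ℕ → ℕ, StrictMono φ ∧ ∃ f : ℝ≥0 → C(X, ℝ), f 0 = g₀ ∧
      (∀ t, f t ∈ lipschitzMaps X K R) ∧
      (∀ t : ℝ≥0, Tendsto (fun k ↦ volume (hypograph (g (φ k) ⌊t / h (φ k)⌋₊) ∆ hypograph (f t)))
        atTop (𝓝 0)) ∧
      ∀ s t, volume.real (hypograph (f t) ∆ hypograph (f s)) ≤
        √(2 * (1 + K) * volume.real (univ : Set X) * (P (hypograph g₀)).toReal * dist s t) := by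
  set c := 2 * (1 + K) * volume.real (univ : Set X) * (P (hypograph g₀)).toReal
  obtain ⟨φ, hφ, v, hvK, hv, hvdist⟩ := exists_subseq_tendsto_of_dist_le
    (u := fun n (t : ℝ≥0) ↦ toL1 (g n ⌊t / h n⌋₊)) (ω := fun n s t ↦ √(c * (dist s t + h n)))
    (ρ := fun s t ↦ √(c * dist s t)) ((isCompact_lipschitzMaps K R).image toL1.continuous)
    (fun n t ↦ mem_image_of_mem _ ((hg n).mem_lipschitzMaps _))
    (fun n s t ↦ by
      simpa only [hg₀] using (hg n).dist_toL1_floor_div_le (hpos n) (by rwa [hg₀]) s t)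
    (fun s t ↦ by simpa using ((hlim.const_add (dist s t)).const_mul c).sqrt)
    (fun t ↦ Continuous.tendsto' (by fun_prop) _ _ (by simp))
  have hv₀ : toL1 g₀ = v 0 := by
    refine tendsto_nhds_unique ?_ (hv 0)
    simp only [NNReal.coe_zero, zero_div, Nat.floor_zero, hg₀, tendsto_const_nhds]
  -- `v 0` determines a continuous representative only on the support of the measure, so `g₀` has
  -- to be prescribed at time `0`.
  have hheight : ∀ t, ∃ f ∈ lipschitzMaps X K R, toL1 f = v t ∧ (t = 0 → f = g₀) := by
    intro t
    obtain rfl | ht := eq_or_ne t 0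
    · exact ⟨g₀, hg₀ 0 ▸ (hg 0).mem_lipschitzMaps 0, hv₀, fun _ ↦ rfl⟩
    · obtain ⟨f, hf, hfv⟩ := hvK t
      exact ⟨f, hf, hfv, fun h ↦ absurd h ht⟩
  choose f hfK hfv hf₀ using hheight
  refine ⟨φ, hφ, f, hf₀ 0 rfl, hfK, fun t ↦ ?_, fun s t ↦ ?_⟩
  · simpa only [volume_symmDiff_hypograph, hfv] using tendsto_iff_edist_tendsto_0.1 (hv t)
  · rw [measureReal_def, volume_symmDiff_hypograph, hfv, hfv, ← dist_edist, dist_comm]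
    exact hvdist s t

end Flow

section ApproxFlow

theorem add_ofReal_sub_le_of_coe_add_le {a b : ℝ≥0∞} {x y : ℝ} (hyx : y ≤ x)
    (h : (a : EReal) + x ≤ b + y) : a + ENNReal.ofReal (x - y) ≤ b := by
  have hsub : (a : EReal) + (x - y : ℝ) ≤ b :=
    calc
      (a : EReal) + (x - y : ℝ) = a + x - y := by rw [EReal.coe_sub, add_sub_assoc]
      _ ≤ b + y - y := EReal.sub_le_sub h le_rfl
      _ = b := EReal.add_sub_cancel_right
  rwa [← EReal.coe_ennreal_le_coe_ennreal_iff, EReal.coe_ennreal_add, EReal.coe_ennreal_ofReal,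
    max_eq_left (sub_nonneg.2 hyx)]

variable {d : ℕ} {P : GenPerimeter d} {L R h : ℝ} {E₀ : Set (Cyl d)} {E : ℕ → Set (Cyl d)}

theorem mem_Ico_of_subgraph_mem_MR {g : Torus d → ℝ} (hg : subgraph d g ∈ MR d R) (x : Torus d) :
    g x ∈ Ico (-R) R :=
  ⟨le_of_forall_lt_imp_le_of_dense fun y hy ↦ hg.2.1 (show (x, y).2 < -R from hy),
    hg.2.2 (show (x, g x).2 ≤ g x from le_rfl)⟩

theorem IsApproxFlow.mem (hE : IsApproxFlow d P L R h E₀ E) (hE₀ : E₀ ∈ LipClass d L ∩ MR d R) :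
    ∀ k, E k ∈ LipClass d L ∩ MR d R
  | 0 => hE.1 ▸ hE₀
  | k + 1 => ⟨(hE.2 k).1, (hE.2 k).2.1⟩

theorem IsMinimizer.energy_le {f g : C(Torus d, ℝ)} (hh : 0 < h)
    (hg : subgraph d g ∈ MR d R) (hf : IsMinimizer d P R h (subgraph d g) (subgraph d f)) :
    P.P (hypograph f) + ENNReal.ofReal
      (1 / h * ∫ p in hypograph f ∆ hypograph g, |signedInfDist (hypograph g) p|) ≤
        P.P (hypograph g) := by
  have hsub := setIntegral_signedInfDist_hypograph_sub (mem_Ico_of_subgraph_mem_MR hf.1)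
    (mem_Ico_of_subgraph_mem_MR hg)
  rw [← hsub, mul_sub]
  refine add_ofReal_sub_le_of_coe_add_le ?_ (hf.2 _ hg)
  exact mul_le_mul_of_nonneg_left
    (sub_nonneg.1 (hsub ▸ integral_nonneg fun _ ↦ abs_nonneg _)) (by positivity)

theorem IsApproxFlow.exists_isDissipativeFlow (hE : IsApproxFlow d P L R h E₀ E) (hh : 0 < h)
    (hE₀ : E₀ ∈ LipClass d L ∩ MR d R) :
    ∃ g : ℕ → C(Torus d, ℝ), (∀ k, E k = hypograph (g k)) ∧
      IsDissipativeFlow P.P L.toNNReal R h g := by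
  choose g hgL hEg using fun k ↦ (hE.mem hE₀ k).1
  have hMR (k : ℕ) : subgraph d (g k) ∈ MR d R := hEg k ▸ (hE.mem hE₀ k).2
  refine ⟨fun k ↦ ⟨g k, (hgL k).continuous⟩, hEg, fun k ↦ ⟨hgL k, fun x ↦ ?_⟩, fun k ↦ ?_⟩
  · exact Ico_subset_Icc_self (mem_Ico_of_subgraph_mem_MR (hMR k) x)
  · have hmin := (hE.2 k).2
    rw [hEg k, hEg (k + 1)] at hmin
    exact hmin.energy_le hh (hMR k)

end ApproxFlow

/-- Existence of flat flows: along a subsequence, the approximate flat solutions converge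
for every time to a `1/2`-Hölder continuous (in measure) family of Lipschitz subgraphs. -/
theorem exists_flatFlow (d : ℕ) (hd : 2 ≤ d) (L : ℝ) (hL : 0 < L) :
    ∃ C : ℝ≥0∞ → ℝ,
      ∀ (P : GenPerimeter d) (R : ℝ), 0 < R → ∀ E₀ ∈ LipClass d L ∩ MR d R,
      ∀ hn : ℕ → ℝ, (∀ n, 0 < hn n) → Antitone hn → Tendsto hn atTop (nhds 0) →
      ∀ Eflow : ℕ → ℕ → Set (Cyl d), (∀ n, IsApproxFlow d P L R (hn n) E₀ (Eflow n)) →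
      ∃ φ : ℕ → ℕ, StrictMono φ ∧ ∃ E0 : ℝ → Set (Cyl d),
        E0 0 = E₀ ∧ (∀ t : ℝ, 0 ≤ t → E0 t ∈ LipClass d L) ∧
        (∀ t : ℝ, 0 ≤ t →
          Tendsto (fun k => volume (symmDiff (Eflow (φ k) ⌊t / hn (φ k)⌋₊) (E0 t)))
            atTop (nhds 0)) ∧
        0 < C (P.P E₀) ∧
        (∀ s t : ℝ, 0 ≤ s → 0 ≤ t →
          (volume (symmDiff (E0 t) (E0 s))).toReal ≤ C (P.P E₀) * |t - s| ^ (1/2 : ℝ)) := by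
  -- The summand `1` keeps the constant positive when `𝒫(E₀) = 0`.
  refine ⟨fun p ↦ √(2 * (1 + L.toNNReal) * volume.real (univ : Set (Torus d)) * p.toReal) + 1,
    fun P R _ E₀ hE₀ h hpos _ hlim E hE ↦ ?_⟩
  choose g hEg hg using fun n ↦ (hE n).exists_isDissipativeFlow (hpos n) hE₀
  have hE₀g (n : ℕ) : E₀ = hypograph (g n 0) := (hE n).1 ▸ hEg n 0
  have hg₀ (n : ℕ) : g n 0 = g 0 0 :=
    DFunLike.coe_injective (hypograph_injective ((hE₀g n).symm.trans (hE₀g 0)))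
  have hP : P.P E₀ ≠ ⊤ := (P.lip_finite L hL E₀ hE₀.1).ne
  rw [hE₀g 0] at hP ⊢
  obtain ⟨φ, hφ, f, hf₀, hfL, hconv, hholder⟩ := exists_flatFlow_general hP hpos hlim hg hg₀
  refine ⟨φ, hφ, fun t ↦ hypograph (f t.toNNReal), by simp [hf₀],
    fun t _ ↦ ⟨f t.toNNReal, (hfL _).1, rfl⟩, fun t ht ↦ ?_, by positivity, fun s t hs ht ↦ ?_⟩
  · simpa only [hEg, Real.coe_toNNReal t ht] using hconv t.toNNReal
  · lift s to ℝ≥0 using hs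
    lift t to ℝ≥0 using ht
    refine (hholder _ _).trans ?_
    rw [Real.toNNReal_coe, Real.toNNReal_coe, Real.sqrt_mul (by positivity), dist_comm,
      NNReal.dist_eq, Real.sqrt_eq_rpow |(t : ℝ) - s|]
    gcongr
    exact le_add_of_nonneg_right zero_le_one
end
end
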